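/- Let n ≥ 1 be an even natural number. The number of sequences (x_1, …, x_n) with each x_i ∈ {1, 2} ⊆ ZMod 3 and x_1 + ⋯ + x_n = 0 in ZMod 3 equals (2^n + 2)/3; equivalently, 3 times this number equals 2^n + 2. -/

import Mathlib

/-!
Let `G` be a finite abelian group of order `q`, and let `N n s` be the number of sequences of `n`
nonzero elements of `G` with sum `s`. In such a sequence of length `n + 1` the first term is
determined by the others, namely as `s` minus their sum, and it is nonzero exactly when the others
do not already sum to `s`. Hence `N (n + 1) s = (q - 1) ^ n - N n s`, and induction on `n` gives
`q * N n s = (q - 1) ^ n + (-1) ^ n * (if s = 0 then q - 1 else -1)`.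
-/

theorem natCard_fun_forall_ne (ι : Type*) {α : Type*} [Finite ι] [Finite α] (a : α) :
    Nat.card {x : ι → α // ∀ i, x i ≠ a} = (Nat.card α - 1) ^ Nat.card ι := by
  have card_ne : Nat.card {b // b ≠ a} = Nat.card α - 1 :=
    (Set.ncard_compl {a}).trans (by rw [Set.ncard_singleton])
  rw [Nat.card_congr (Equiv.subtypePiEquivPi (p := fun _ : ι ↦ (· ≠ a))), Nat.card_fun, card_ne]

theorem natCard_subtype_and_add_and_not {α : Type*} [Finite α] (p q : α → Prop) :
    Nat.card {a // p a ∧ q a} + Nat.card {a // p a ∧ ¬q a} = Nat.card {a // p a} :=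
  Set.ncard_inter_add_ncard_sdiff_eq_ncard {a | p a} {a | q a}

section AddCommGroup

variable {G : Type*} [AddCommGroup G]

/-- Dropping the first term of a sequence of nonzero elements with sum `s`; the inverse prepends
`s` minus the sum of the remaining terms. It reduces counting such sequences to a shorter length. -/
def nonzeroSeqTailEquiv (n : ℕ) (s : G) :
    {x : Fin (n + 1) → G // (∀ i, x i ≠ 0) ∧ ∑ i, x i = s} ≃
      {y : Fin n → G // (∀ i, y i ≠ 0) ∧ ∑ i, y i ≠ s} where
  toFun x := ⟨Fin.tail x.1, fun i ↦ x.2.1 i.succ, fun tail_sum ↦ x.2.1 0 <| by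
    have head_add_tail : x.1 0 + ∑ i, Fin.tail x.1 i = s :=
      (Fin.sum_univ_succ x.1).symm.trans x.2.2
    exact add_eq_right.mp (head_add_tail.trans tail_sum.symm)⟩
  invFun y := ⟨Fin.cons (s - ∑ i, y.1 i) y.1,
    Fin.cases (sub_ne_zero.mpr y.2.2.symm) y.2.1, by simp [Fin.sum_cons]⟩
  left_inv x := by
    have head_eq : s - ∑ i, Fin.tail x.1 i = x.1 0 :=
      sub_eq_of_eq_add (x.2.2.symm.trans (Fin.sum_univ_succ x.1))
    exact Subtype.ext (by simp only [head_eq, Fin.cons_self_tail])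
  right_inv _ := rfl

theorem natCard_nonzero_seq_sum_zero_length [DecidableEq G] (s : G) :
    Nat.card {x : Fin 0 → G // (∀ i, x i ≠ 0) ∧ ∑ i, x i = s} = if s = 0 then 1 else 0 := by
  split_ifs with hs <;> simp [hs, eq_comm]

theorem natCard_nonzero_seq_sum_add_succ [Finite G] (n : ℕ) (s : G) :
    Nat.card {x : Fin n → G // (∀ i, x i ≠ 0) ∧ ∑ i, x i = s} +
      Nat.card {x : Fin (n + 1) → G // (∀ i, x i ≠ 0) ∧ ∑ i, x i = s} =
        (Nat.card G - 1) ^ n := by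
  rw [Nat.card_congr (nonzeroSeqTailEquiv n s), natCard_subtype_and_add_and_not,
    natCard_fun_forall_ne, Nat.card_fin]

theorem card_nonzero_seq_sum_zero_even_general [Finite G] [DecidableEq G] (n : ℕ) (s : G) :
    (Nat.card G * Nat.card {x : Fin n → G // (∀ i, x i ≠ 0) ∧ ∑ i, x i = s} : ℤ) =
      (Nat.card G - 1) ^ n + (-1) ^ n * (if s = 0 then (Nat.card G : ℤ) - 1 else -1) := by
  induction n with
  | zero =>
    rw [natCard_nonzero_seq_sum_zero_length]
    split_ifs <;> simp
  | succ n ih =>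
    have recurrence := congrArg (Nat.cast (R := ℤ)) (natCard_nonzero_seq_sum_add_succ n s)
    rw [Nat.cast_add, Nat.cast_pow, Nat.cast_pred Nat.card_pos] at recurrence
    linear_combination (Nat.card G : ℤ) * recurrence - ih

end AddCommGroup

theorem zmod_three_eq_one_or_eq_two_iff (a : ZMod 3) : a = 1 ∨ a = 2 ↔ a ≠ 0 := by
  decide +revert

/-- For even `n ≥ 1`, the number of sequences `x : Fin n → ZMod 3` with all values
in `{1, 2}` and total sum `0` equals `(2 ^ n + 2) / 3`; equivalently, three times
this number equals `2 ^ n + 2`. -/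
theorem card_nonzero_seq_sum_zero_even (n : ℕ) (hn : 1 ≤ n) (hpar : Even n) :
    3 * Nat.card {x : Fin n → ZMod 3 //
      (∀ i, x i = 1 ∨ x i = 2) ∧ ∑ i, x i = 0} = 2 ^ n + 2 := by
  have count := card_nonzero_seq_sum_zero_even_general n (0 : ZMod 3)
  norm_num only [Nat.card_zmod, hpar.neg_one_pow, if_true] at count
  simp only [zmod_three_eq_one_or_eq_two_iff]
  exact_mod_cast count
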